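/- For every integer n ≥ 1, the triple convolution ∑_{i₁+i₂+i₃=n, i₁,i₂,i₃≥0} (2n)!/((2i₁)!(2i₂)!(2i₃)!) · 𝔠_{2i₁} 𝔠_{2i₂} 𝔠_{2i₃} = (2n-1)(n-1) · 𝔠_{2n} + n(2n-1)(2n-3)² · 𝔠_{2n-2}. -/

import Mathlib

/-- Stirling numbers of the first kind with level 2. -/
def T2 : ℕ → ℕ → ℕ
  | 0, 0 => 1
  | 0, _ + 1 => 0
  | _ + 1, 0 => 0
  | n + 1, m + 1 => T2 n m + n ^ 2 * T2 n (m + 1)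

/-- Cauchy numbers with level 2: `cauchy2 n = 𝔠_{2n}`. -/
def cauchy2 (n : ℕ) : ℚ :=
  ∑ m ∈ Finset.range (n + 1), (-4 : ℚ) ^ (n - m) * (T2 n m : ℚ) / (2 * (m : ℚ) + 1)

/-- `odFact i = (2i-1)!!`, with `odFact 0 = (-1)!! = 1`. -/
def odFact : ℕ → ℚ
  | 0 => 1
  | i + 1 => (2 * (i : ℚ) + 1) * odFact i

/-- `ddf j = (2j-1)!!`, the odd double factorial extended to all integers:
for `j ≥ 0` it is `(2j-1)(2j-3)⋯1` (with `(-1)!! = 1`), and for `j = -i < 0`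
it is `(-(2i+1))!! = (-1)^i/(2i-1)!!`. -/
def ddf (j : ℤ) : ℚ :=
  if 0 ≤ j then odFact j.toNat else (-1 : ℚ) ^ (-j).toNat / odFact (-j).toNat

/-! The generating function `F = ∑ 𝔠₂ₙ t²ⁿ / (2n)!` equals `t / arcsinh t`. Indeed
`(1 + t²) ∂² + t ∂` is the second derivative with respect to `arcsinh t`, so the coefficients of
`arcsinh (t) ^ (2m)` obey the recurrence of `T2`, and `F` is obtained by writing `sinh (y) / y` as
a series in `y = arcsinh t`. As `(1 + t²) (arcsinh' t)² = 1`, it follows that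
`(1 + t²) (F - t F')² = F⁴`. Differentiating and cancelling `2 (F - t F')` makes `2 F³` a *linear*
differential expression in `F`, whose coefficient of `t²ⁿ` is the convolution identity. -/

open PowerSeries

section PowerSeriesOperators

theorem coeff_X_pow_mul_iterate_derivative {R : Type*} [CommSemiring R] (f : R⟦X⟧) (k n : ℕ) :
    coeff n (X ^ k * (d⁄dX R)^[k] f) = n.descFactorial k * coeff n f := by
  rw [coeff_X_pow_mul']
  split_ifs with hkn
  · obtain ⟨m, rfl⟩ := Nat.exists_eq_add_of_le' hkn
    rw [Nat.add_sub_cancel, coeff_iterate_derivative, Nat.add_descFactorial_eq_ascFactorial]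
  · rw [Nat.descFactorial_of_lt (not_le.mp hkn), Nat.cast_zero, zero_mul]

theorem coeff_X_mul_derivative {R : Type*} [CommSemiring R] (f : R⟦X⟧) (n : ℕ) :
    coeff n (X * d⁄dX R f) = n * coeff n f := by
  simpa using coeff_X_pow_mul_iterate_derivative f 1 n

theorem coeff_pow_eq_zero_of_lt {R : Type*} [CommSemiring R] {f : R⟦X⟧}
    (hf : constantCoeff f = 0) {n m : ℕ} (h : n < m) : coeff n (f ^ m) = 0 :=
  X_pow_dvd_iff.mp (pow_dvd_pow_of_dvd (X_dvd_iff.mpr hf) m) n h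

theorem powerSeries_two_ne_zero {R : Type*} [Semiring R] [NeZero (2 : R)] : (2 : R⟦X⟧) ≠ 0 :=
  fun h ↦ two_ne_zero (α := R) (by simpa [map_ofNat] using congrArg constantCoeff h)

variable {R : Type*} [CommRing R]

theorem coeff_X_sq_mul_derivative_derivative (f : R⟦X⟧) (n : ℕ) :
    coeff n (X ^ 2 * d⁄dX R (d⁄dX R f)) = n * (n - 1) * coeff n f := by
  rw [← Nat.cast_descFactorial_two]
  exact coeff_X_pow_mul_iterate_derivative f 2 n

theorem coeff_one_add_X_sq_mul_derivative_derivative_add (f : R⟦X⟧) (n : ℕ) :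
    coeff n ((1 + X ^ 2) * d⁄dX R (d⁄dX R f) + X * d⁄dX R f) =
      (n + 2) * (n + 1) * coeff (n + 2) f + n ^ 2 * coeff n f := by
  rw [add_mul, one_mul, map_add, map_add, coeff_X_mul_derivative,
    coeff_X_sq_mul_derivative_derivative, coeff_derivative, coeff_derivative]
  push_cast
  ring

theorem one_add_X_sq_mul_derivative_derivative_add_eq_zero [IsDomain R] [NeZero (2 : R)]
    {f : R⟦X⟧} (hf : (1 + X ^ 2) * d⁄dX R f ^ 2 = 1) :
    (1 + X ^ 2) * d⁄dX R (d⁄dX R f) + X * d⁄dX R f = 0 := by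
  have hne : 2 * d⁄dX R f ≠ 0 :=
    mul_ne_zero powerSeries_two_ne_zero fun h ↦ by simp [h] at hf
  have hderiv := congrArg (d⁄dX R) hf
  simp only [Derivation.leibniz, Derivation.leibniz_pow, map_add, derivative_X,
    Derivation.map_one_eq_zero, smul_eq_mul, nsmul_eq_mul] at hderiv
  push_cast at hderiv
  apply mul_left_cancel₀ hne
  linear_combination hderiv

theorem one_add_X_sq_mul_derivative_derivative_pow_add [IsDomain R] [NeZero (2 : R)]
    {f : R⟦X⟧} (hf : (1 + X ^ 2) * d⁄dX R f ^ 2 = 1) (m : ℕ) :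
    (1 + X ^ 2) * d⁄dX R (d⁄dX R (f ^ (m + 2))) + X * d⁄dX R (f ^ (m + 2)) =
      C (((m : R) + 2) * (m + 1)) * f ^ m := by
  have hf₂ := one_add_X_sq_mul_derivative_derivative_add_eq_zero hf
  simp only [Derivation.leibniz, Derivation.leibniz_pow, smul_eq_mul, nsmul_eq_mul,
    Derivation.map_natCast, map_add, map_mul, map_one, map_natCast, map_ofNat,
    Nat.add_succ_sub_one]
  push_cast
  linear_combination
    ((m : R⟦X⟧) + 2) * f ^ (m + 1) * hf₂ + ((m : R⟦X⟧) + 2) * (m + 1) * f ^ m * hf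

theorem two_mul_pow_three_of_one_add_X_sq_mul_sq_eq_pow_four [IsDomain R] [NeZero (2 : R)]
    {f : R⟦X⟧} (hf₀ : constantCoeff f ≠ 0)
    (hf : (1 + X ^ 2) * (f - X * d⁄dX R f) ^ 2 = f ^ 4) :
    2 * f ^ 3 = (X ^ 2 * d⁄dX R (d⁄dX R f) - 2 * (X * d⁄dX R f) + 2 * f) +
      X ^ 2 * (X ^ 2 * d⁄dX R (d⁄dX R f) - X * d⁄dX R f + f) := by
  have hne : 2 * (f - X * d⁄dX R f) ≠ 0 :=
    mul_ne_zero powerSeries_two_ne_zero fun h ↦ hf₀ (by simpa using congrArg constantCoeff h)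
  have hderiv := congrArg (d⁄dX R) hf
  simp only [Derivation.leibniz, Derivation.leibniz_pow, map_add, map_sub, derivative_X,
    Derivation.map_one_eq_zero, smul_eq_mul, nsmul_eq_mul] at hderiv
  push_cast at hderiv
  apply mul_left_cancel₀ hne
  linear_combination -4 * hf + X * hderiv

end PowerSeriesOperators

theorem sum_piAntidiag_multinomial_mul_prod {K ι : Type*} [Field K] [CharZero K] [DecidableEq ι]
    (s : Finset ι) (a : ι → ℕ → K) (d n : ℕ) :
    ∑ x ∈ s.piAntidiag n, (Nat.multinomial s (fun j ↦ d * x j) : K) * ∏ j ∈ s, a j (x j) =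
      (d * n).factorial * coeff n (∏ j ∈ s, mk fun i ↦ a j i / (d * i).factorial) := by
  rw [coeff_prod, Finset.mul_sum, Finset.finsuppAntidiag, Finset.sum_map, ← Finset.sum_attach]
  refine Finset.sum_congr rfl fun x _ ↦ ?_
  have hspec := Nat.multinomial_spec s (fun j ↦ d * x.1 j)
  rw [← Finset.mul_sum, (Finset.mem_piAntidiag.mp x.2).1] at hspec
  have hne : ∏ j ∈ s, ((d * x.1 j).factorial : K) ≠ 0 :=
    Finset.prod_ne_zero_iff.mpr fun j _ ↦ Nat.cast_ne_zero.mpr (Nat.factorial_ne_zero _)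
  change _ = _ * ∏ j ∈ s, coeff (x.1 j) (mk fun i ↦ a j i / ((d * i).factorial : K))
  simp only [coeff_mk, Finset.prod_div_distrib, ← hspec, Nat.cast_mul, Nat.cast_prod]
  field_simp

section Arcsinh

/-- The power series of the hyperbolic sine. -/
def sinhSeries : ℚ⟦X⟧ := mk fun n ↦ if Odd n then 1 / (n.factorial : ℚ) else 0

theorem constantCoeff_sinhSeries : constantCoeff sinhSeries = 0 := by
  simp [← coeff_zero_eq_constantCoeff_apply, sinhSeries]

theorem coeff_one_sinhSeries : coeff 1 sinhSeries = 1 := by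
  simp [sinhSeries]

theorem derivative_derivative_sinhSeries : d⁄dX ℚ (d⁄dX ℚ sinhSeries) = sinhSeries := by
  ext n
  rw [coeff_derivative, coeff_derivative]
  simp only [sinhSeries, coeff_mk, Nat.factorial_succ, Nat.odd_add_one, not_not]
  split_ifs
  · push_cast
    field_simp
  · simp

theorem derivative_sinhSeries_sq : d⁄dX ℚ sinhSeries ^ 2 = 1 + sinhSeries ^ 2 := by
  apply derivative.ext
  · simp only [Derivation.leibniz_pow, map_add, Derivation.map_one_eq_zero,
      derivative_derivative_sinhSeries, smul_eq_mul, nsmul_eq_mul]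
    ring
  · have h : constantCoeff (d⁄dX ℚ sinhSeries) = 1 := by
      rw [← coeff_zero_eq_constantCoeff_apply, coeff_derivative]
      simp [coeff_one_sinhSeries]
    simp [h, constantCoeff_sinhSeries]

/-- The power series of the inverse hyperbolic sine, as the compositional inverse of
`sinhSeries`. -/
noncomputable def arcsinhSeries : ℚ⟦X⟧ :=
  sinhSeries.substInvOfIsUnit (coeff_one_sinhSeries ▸ isUnit_one)

theorem constantCoeff_arcsinhSeries : constantCoeff arcsinhSeries = 0 :=
  constantCoeff_substInvOfIsUnit ..

theorem hasSubst_arcsinhSeries : HasSubst arcsinhSeries :=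
  .of_constantCoeff_zero' constantCoeff_arcsinhSeries

theorem sinhSeries_subst_arcsinhSeries : sinhSeries.subst arcsinhSeries = X :=
  subst_substInvOfIsUnit_right _ constantCoeff_sinhSeries _

theorem one_add_X_sq_mul_derivative_arcsinhSeries_sq :
    (1 + X ^ 2) * d⁄dX ℚ arcsinhSeries ^ 2 = 1 := by
  have hchain : (d⁄dX ℚ sinhSeries).subst arcsinhSeries * d⁄dX ℚ arcsinhSeries = 1 := by
    rw [← derivative_subst hasSubst_arcsinhSeries, sinhSeries_subst_arcsinhSeries, derivative_X]
  have hcosh : (d⁄dX ℚ sinhSeries).subst arcsinhSeries ^ 2 = 1 + X ^ 2 := by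
    rw [← subst_pow hasSubst_arcsinhSeries, derivative_sinhSeries_sq,
      ← coe_substAlgHom hasSubst_arcsinhSeries, map_add, map_one, map_pow,
      coe_substAlgHom, sinhSeries_subst_arcsinhSeries]
  rw [← hcosh, ← mul_pow, hchain, one_pow]

theorem coeff_arcsinhSeries_pow_add_two (n m : ℕ) :
    ((n : ℚ) + 2) * (n + 1) * coeff (n + 2) (arcsinhSeries ^ (m + 2)) =
      (m + 2) * (m + 1) * coeff n (arcsinhSeries ^ m) -
        n ^ 2 * coeff n (arcsinhSeries ^ (m + 2)) := by
  have h := congrArg (coeff n) (one_add_X_sq_mul_derivative_derivative_pow_add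
    one_add_X_sq_mul_derivative_arcsinhSeries_sq m)
  rw [coeff_one_add_X_sq_mul_derivative_derivative_add, coeff_C_mul] at h
  linear_combination h

theorem coeff_odd_arcsinhSeries_pow_even (n m : ℕ) :
    coeff (2 * n + 1) (arcsinhSeries ^ (2 * m)) = 0 := by
  induction n generalizing m with
  | zero =>
    obtain rfl | hm := m.eq_zero_or_pos
    · simp [coeff_one]
    · exact coeff_pow_eq_zero_of_lt constantCoeff_arcsinhSeries (by lia)
  | succ n ih =>
    obtain _ | m := m
    · simp [coeff_one]
    · have hrec := coeff_arcsinhSeries_pow_add_two (2 * n + 1) (2 * m)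
      rw [ih m, show 2 * m + 2 = 2 * (m + 1) by ring, ih (m + 1), mul_zero, mul_zero, sub_zero]
        at hrec
      exact (mul_eq_zero.mp hrec).resolve_left (by positivity)

end Arcsinh

section Cauchy

theorem T2_eq_zero_of_lt {n m : ℕ} (h : n < m) : T2 n m = 0 := by
  induction n generalizing m with
  | zero => obtain _ | m := m <;> simp_all [T2]
  | succ n ih =>
    obtain _ | m := m
    · lia
    · simp [T2, ih (show n < m by lia), ih (show n < m + 1 by lia)]

theorem neg_four_pow_mul_T2_succ_succ (n m : ℕ) :
    (-4 : ℚ) ^ (n + 1 - (m + 1)) * T2 (n + 1) (m + 1) =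
      (-4) ^ (n - m) * T2 n m - (2 * n) ^ 2 * ((-4) ^ (n - (m + 1)) * T2 n (m + 1)) := by
  rw [T2, Nat.add_sub_add_right]
  obtain h | h := Nat.lt_or_ge n (m + 1)
  · simp [T2_eq_zero_of_lt h]
  · rw [show n - m = n - (m + 1) + 1 by lia]
    push_cast
    ring

theorem coeff_even_arcsinhSeries_pow_even (n m : ℕ) :
    coeff (2 * n) (arcsinhSeries ^ (2 * m)) =
      (2 * m).factorial / (2 * n).factorial * ((-4) ^ (n - m) * T2 n m) := by
  induction n generalizing m with
  | zero =>
    obtain _ | m := m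
    · simp [T2]
    · rw [coeff_pow_eq_zero_of_lt constantCoeff_arcsinhSeries (by lia)]
      simp [T2]
  | succ n ih =>
    obtain _ | m := m
    · simp [T2, coeff_one]
    · have hrec := coeff_arcsinhSeries_pow_add_two (2 * n) (2 * m)
      rw [ih m, show 2 * m + 2 = 2 * (m + 1) by ring, ih (m + 1)] at hrec
      rw [neg_four_pow_mul_T2_succ_succ]
      simp only [Nat.mul_add_one, Nat.factorial_succ] at hrec ⊢
      push_cast at hrec ⊢
      field_simp at hrec ⊢
      linear_combination 2 * hrec

/-- The exponential generating function `∑ 𝔠₂ₙ Xⁿ / (2n)!` of the Cauchy numbers with level 2, in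
the variable `X = t²`. -/
noncomputable def cauchySeries : ℚ⟦X⟧ := mk fun n ↦ cauchy2 n / (2 * n).factorial

/-- The power series `∑ Xᵐ / (2m + 1)!`, that is `sinh √X / √X`. -/
def sinhSqrtDivSqrtSeries : ℚ⟦X⟧ := mk fun m ↦ 1 / ((2 * m + 1).factorial : ℚ)

theorem X_mul_expand_sinhSqrtDivSqrtSeries :
    X * expand 2 two_ne_zero sinhSqrtDivSqrtSeries = sinhSeries := by
  ext n
  obtain _ | n := n
  · simp [sinhSeries]
  · rw [coeff_succ_X_mul, coeff_expand]
    obtain ⟨m, rfl | rfl⟩ := n.even_or_odd' <;>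
      simp [sinhSeries, sinhSqrtDivSqrtSeries, Nat.odd_add_one]

theorem expand_cauchySeries :
    expand 2 two_ne_zero cauchySeries = sinhSqrtDivSqrtSeries.subst (arcsinhSeries ^ 2) := by
  ext k
  rw [coeff_subst' (.of_constantCoeff_zero' (by simp [constantCoeff_arcsinhSeries]))]
  simp only [← pow_mul, smul_eq_mul]
  obtain ⟨n, rfl | rfl⟩ := k.even_or_odd'
  · rw [coeff_expand_mul, finsum_eq_sum_of_support_subset (s := Finset.range (n + 1)),
      cauchySeries, coeff_mk, cauchy2, Finset.sum_div]
    · refine Finset.sum_congr rfl fun m _ ↦ ?_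
      rw [coeff_even_arcsinhSeries_pow_even, sinhSqrtDivSqrtSeries, coeff_mk, Nat.factorial_succ]
      push_cast
      field_simp
    · refine Function.support_subset_iff'.mpr fun m hm ↦ ?_
      rw [Finset.mem_coe, Finset.mem_range, not_lt] at hm
      rw [coeff_pow_eq_zero_of_lt constantCoeff_arcsinhSeries (by lia), mul_zero]
  · rw [coeff_expand_of_not_dvd _ _ _ (by lia)]
    simp [coeff_odd_arcsinhSeries_pow_even]

theorem arcsinhSeries_mul_expand_cauchySeries :
    arcsinhSeries * expand 2 two_ne_zero cauchySeries = X := by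
  have hA := hasSubst_arcsinhSeries
  calc arcsinhSeries * expand 2 two_ne_zero cauchySeries
      = (X * expand 2 two_ne_zero sinhSqrtDivSqrtSeries).subst arcsinhSeries := by
        rw [expand_cauchySeries, subst_mul hA, subst_X hA, expand_apply,
          subst_comp_subst_apply (.X_pow two_ne_zero) hA, subst_pow hA, subst_X hA]
    _ = X := by rw [X_mul_expand_sinhSqrtDivSqrtSeries, sinhSeries_subst_arcsinhSeries]

theorem constantCoeff_cauchySeries : constantCoeff cauchySeries = 1 := by
  simp [← coeff_zero_eq_constantCoeff_apply, cauchySeries, cauchy2, T2]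

theorem one_add_X_sq_mul_expand_cauchySeries_sub_sq :
    (1 + X ^ 2) * (expand 2 two_ne_zero cauchySeries -
        X * d⁄dX ℚ (expand 2 two_ne_zero cauchySeries)) ^ 2 =
      expand 2 two_ne_zero cauchySeries ^ 4 := by
  set F := expand 2 two_ne_zero cauchySeries
  have hmul : arcsinhSeries * F = X := arcsinhSeries_mul_expand_cauchySeries
  have hderiv := congrArg (d⁄dX ℚ) hmul
  simp only [Derivation.leibniz, smul_eq_mul, derivative_X] at hderiv
  have hsub : F - X * d⁄dX ℚ F = F ^ 2 * d⁄dX ℚ arcsinhSeries := by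
    linear_combination d⁄dX ℚ F * hmul - F * hderiv
  rw [hsub]
  linear_combination F ^ 4 * one_add_X_sq_mul_derivative_arcsinhSeries_sq

theorem coeff_cauchySeries_pow_three (n : ℕ) :
    coeff (n + 1) (cauchySeries ^ 3) = (2 * n + 1) * n * coeff (n + 1) cauchySeries +
      (2 * n - 1) ^ 2 / 2 * coeff n cauchySeries := by
  have hode := two_mul_pow_three_of_one_add_X_sq_mul_sq_eq_pow_four
    (by simp [constantCoeff_cauchySeries]) one_add_X_sq_mul_expand_cauchySeries_sub_sq
  have hcoeff := congrArg (coeff (2 * n + 2)) hode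
  rw [← map_pow, map_add, coeff_X_pow_mul, show (2 : ℚ⟦X⟧) = C 2 from rfl] at hcoeff
  simp only [map_add, map_sub, coeff_C_mul, coeff_X_mul_derivative,
    coeff_X_sq_mul_derivative_derivative] at hcoeff
  rw [← Nat.mul_add_one] at hcoeff
  simp only [coeff_expand_mul] at hcoeff
  push_cast at hcoeff
  linear_combination hcoeff / 2

end Cauchy

theorem statement5 (n : ℕ) (hn : 1 ≤ n) :
    ∑ x ∈ Finset.Nat.antidiagonalTuple 3 n,
        (Nat.multinomial Finset.univ (fun j => 2 * x j) : ℚ) * ∏ j, cauchy2 (x j) =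
    (2 * (n : ℚ) - 1) * ((n : ℚ) - 1) * cauchy2 n +
      (n : ℚ) * (2 * (n : ℚ) - 1) * (2 * (n : ℚ) - 3) ^ 2 * cauchy2 (n - 1) := by
  obtain ⟨n, rfl⟩ := Nat.exists_eq_add_of_le' hn
  rw [← Finset.piAntidiag_univ_fin_eq_antidiagonalTuple,
    sum_piAntidiag_multinomial_mul_prod Finset.univ (fun _ ↦ cauchy2)]
  change _ * coeff (n + 1) (∏ _j : Fin 3, cauchySeries) = _
  rw [Fin.prod_const, coeff_cauchySeries_pow_three, cauchySeries, coeff_mk, coeff_mk,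
    Nat.add_sub_cancel, Nat.mul_add_one, Nat.factorial_succ, Nat.factorial_succ]
  push_cast
  field_simp
  ring
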